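/- Let N be a positive integer, h = (h₁,h₂) ∈ ℤ², τ ∈ H, t > 0, and ε, ε' ∈ (−1/2, 1/2) \ {0}. Then all the series below converge absolutely and the Poisson-summation identity holds: τ^{−1}·Θ̃_h(−1/τ, t; ε, ε') = ( e(2εε'/N) / N ) · Σ_{δ = (δ₁,δ₂), 0 ≤ δ₁,δ₂ ≤ N−1} e( (δ₁h₂ + δ₂h₁)/N ) · Θ̃_δ(τ, t; −ε', ε), where Θ̃_h(τ, t; ε, ε') := Σ_{x₁ ≡ h₁ (mod N), x₂ ≡ h₂ (mod N)} φ̃_τ( ι_t(x₁+ε, x₂+ε) )·e( ε'·(x₁+x₂+2ε)/N ). -/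

import Mathlib

open MeasureTheory Filter Set

noncomputable section

/-- `e(z) = exp(2πiz)` -/
def eC (z : ℂ) : ℂ := Complex.exp (2 * Real.pi * Complex.I * z)

/-- The complementary error function `erfc(x) = (2/√π)∫_x^∞ e^{-r²} dr`. -/
def erfc (x : ℝ) : ℝ := (2 / Real.sqrt Real.pi) * ∫ r in Set.Ioi x, Real.exp (-(r ^ 2))

/-- `φ*_τ(x,y) = e(((y²-x²)/2)τ)·sgn(x)·erfc(√(2πv)|x|)`. -/
def phiStar (τ : ℂ) (x y : ℝ) : ℂ :=
  eC ((((y : ℂ) ^ 2 - (x : ℂ) ^ 2) / 2) * τ) * (Real.sign x : ℂ) *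
    (erfc (Real.sqrt (2 * Real.pi * τ.im) * |x|) : ℂ)

/-- `φ⁺_τ(x,y) = e(((y²-x²)/2)τ)·sgn(x)·1_{y²>x²}`. -/
def phiPlus (τ : ℂ) (x y : ℝ) : ℂ :=
  eC ((((y : ℂ) ^ 2 - (x : ℂ) ^ 2) / 2) * τ) * (Real.sign x : ℂ) *
    (if x ^ 2 < y ^ 2 then 1 else 0)

/-- `φ̃_τ = φ⁺_τ - φ*_τ`. -/
def phiTilde (τ : ℂ) (x y : ℝ) : ℂ := phiPlus τ x y - phiStar τ x y

/-- The isometry `ι_t(x₁,x₂) = ((t⁻¹x₁+tx₂)/√(2N), (t⁻¹x₁-tx₂)/√(2N))`. -/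
def iota (N : ℕ) (t x₁ x₂ : ℝ) : ℝ × ℝ :=
  ((t⁻¹ * x₁ + t * x₂) / Real.sqrt (2 * N), (t⁻¹ * x₁ - t * x₂) / Real.sqrt (2 * N))

/-- The term of the doubly shifted theta series `Θ̃_h(τ,t;ε,ε')` indexed by `p ∈ ℤ²`,
corresponding to `x_j = h_j + N·p_j`:
`φ̃_τ(ι_t(x₁+ε, x₂+ε))·e(ε'·(x₁+x₂+2ε)/N)`. -/
def thetaTerm (N : ℕ) (h : ℤ × ℤ) (τ : ℂ) (t ε ε' : ℝ) (p : ℤ × ℤ) : ℂ :=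
  phiTilde τ
      (iota N t (((h.1 + N * p.1 : ℤ) : ℝ) + ε) (((h.2 + N * p.2 : ℤ) : ℝ) + ε)).1
      (iota N t (((h.1 + N * p.1 : ℤ) : ℝ) + ε) (((h.2 + N * p.2 : ℤ) : ℝ) + ε)).2 *
    eC (((ε' * (((h.1 + N * p.1 : ℤ) : ℝ) + ((h.2 + N * p.2 : ℤ) : ℝ) + 2 * ε) / N : ℝ) : ℂ))


lemma poisson_one (α : ℝ) (hα : 0 < α) (a θ : ℝ) (l0 l1 : ℂ) :
    ∑' n : ℤ, (l0 + l1 * (a + n)) *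
      Complex.exp (-Real.pi * α * (a + n) ^ 2 + 2 * Real.pi * Complex.I * (a + n) * θ) =
    (1 / (Real.sqrt α : ℂ)) * ∑' m : ℤ, (l0 - Complex.I * l1 * (m - θ) / α) *
      Complex.exp (-Real.pi * (m - θ) ^ 2 / α + 2 * Real.pi * Complex.I * a * m) := by
  have hαC : (α : ℂ) ≠ 0 := by exact_mod_cast hα.ne'
  have hpi : (Real.pi : ℂ) ≠ 0 := by exact_mod_cast Real.pi_ne_zero
  have hI := Complex.I_ne_zero
  have hII := Complex.I_sq
  set T : ℂ := Complex.I * α with hT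
  set z : ℂ := θ + Complex.I * α * a with hz
  have hTim : 0 < T.im := by simp [hT, hα]
  have hT0 : T ≠ 0 := mul_ne_zero hI hαC
  have hT' : 0 < (-1 / T).im := by
    have : (-1 / T) = Complex.I * ((α⁻¹ : ℝ) : ℂ) := by
      rw [hT]; push_cast; field_simp; rw [hII]
    rw [this]; simp [hα]
  have hsq : (-Complex.I * T) ^ (1 / 2 : ℂ) = (Real.sqrt α : ℂ) := by
    have : -Complex.I * T = (α : ℂ) := by rw [hT, ← mul_assoc]; simp
    rw [this, Real.sqrt_eq_rpow, Complex.ofReal_cpow hα.le]; norm_num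
  have f0 := jacobiTheta₂_functional_equation z T
  have f1 := jacobiTheta₂'_functional_equation z T
  rw [hsq] at f0 f1
  have s0 := hasSum_jacobiTheta₂_term z hTim
  have s1 := hasSum_jacobiTheta₂'_term z hTim
  have r0 := hasSum_jacobiTheta₂_term (z / T) hT'
  have r1 := hasSum_jacobiTheta₂'_term (z / T) hT'
  set E0 : ℂ := Complex.exp (-Real.pi * α * a ^ 2 + 2 * Real.pi * Complex.I * a * θ) with hE0
  have L := ((s0.mul_left (l0 + l1 * a)).add (s1.mul_left (l1 / (2 * Real.pi * Complex.I)))).mul_left E0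
  have R := ((r0.mul_left (l0 + l1 * a - l1 * z / T)).add
    (r1.mul_left (l1 / T / (2 * Real.pi * Complex.I)))).mul_left
      (E0 * Complex.exp (-Real.pi * Complex.I * z ^ 2 / T))
  have hL : (fun n : ℤ => (l0 + l1 * (a + n)) *
      Complex.exp (-Real.pi * α * (a + n) ^ 2 + 2 * Real.pi * Complex.I * (a + n) * θ)) =
      fun n : ℤ => E0 * ((l0 + l1 * a) * jacobiTheta₂_term n z T +
        l1 / (2 * Real.pi * Complex.I) * jacobiTheta₂'_term n z T) := by
    funext n
    have : Complex.exp (-Real.pi * α * (a + n) ^ 2 + 2 * Real.pi * Complex.I * (a + n) * θ) =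
        E0 * jacobiTheta₂_term n z T := by
      rw [jacobiTheta₂_term, hE0, ← Complex.exp_add]
      congr 1
      rw [hz, hT]
      linear_combination (-2 * Real.pi * n * α * a - Real.pi * n ^ 2 * α) * hII
    rw [this, jacobiTheta₂'_term]
    field_simp
    ring
  have hR : (fun m : ℤ => (l0 - Complex.I * l1 * (m - θ) / α) *
      Complex.exp (-Real.pi * (m - θ) ^ 2 / α + 2 * Real.pi * Complex.I * a * m)) =
      fun m : ℤ => E0 * Complex.exp (-Real.pi * Complex.I * z ^ 2 / T) *
        ((l0 + l1 * a - l1 * z / T) * jacobiTheta₂_term m (z / T) (-1 / T) +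
        l1 / T / (2 * Real.pi * Complex.I) * jacobiTheta₂'_term m (z / T) (-1 / T)) := by
    funext m
    have : Complex.exp (-Real.pi * (m - θ) ^ 2 / α + 2 * Real.pi * Complex.I * a * m) =
        E0 * Complex.exp (-Real.pi * Complex.I * z ^ 2 / T) *
          jacobiTheta₂_term m (z / T) (-1 / T) := by
      rw [jacobiTheta₂_term, hE0, ← Complex.exp_add, ← Complex.exp_add]
      congr 1
      rw [hz, hT]
      field_simp
      linear_combination (α^2 * a^2) * hII
    rw [this, jacobiTheta₂'_term]
    have h2 : l0 - Complex.I * l1 * (m - θ) / α = l0 + l1 * a - l1 * z / T + l1 / T * m := by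
      rw [hz, hT]
      field_simp
      linear_combination (-l1 * (m - θ)) * hII
    rw [h2]
    field_simp
  rw [hL, hR, L.tsum_eq, R.tsum_eq, f0, f1]
  field_simp
  ring

lemma poisson_N (N : ℕ) (hN : 0 < N) (α : ℝ) (hα : 0 < α) (a θ : ℝ) (l0 l1 : ℂ) :
    ∑' n : ℤ, (l0 + l1 * (a + N * n)) *
      Complex.exp (-Real.pi * α * (a + N * n) ^ 2 + 2 * Real.pi * Complex.I * (a + N * n) * θ) =
    (1 / (N * (Real.sqrt α : ℂ))) * ∑' m : ℤ, (l0 - Complex.I * l1 * (m / N - θ) / α) *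
      Complex.exp (-Real.pi * (m / N - θ) ^ 2 / α + 2 * Real.pi * Complex.I * a * m / N) := by
  have hNR : (0 : ℝ) < N := by exact_mod_cast hN
  have hNC : (N : ℂ) ≠ 0 := by exact_mod_cast hN.ne'
  have hαC : (α : ℂ) ≠ 0 := by exact_mod_cast hα.ne'
  have key := poisson_one (α * N ^ 2) (by positivity) (a / N) (N * θ) l0 (l1 * N)
  rw [Real.sqrt_mul hα.le, Real.sqrt_sq hNR.le] at key
  push_cast at key
  rw [mul_comm (N : ℂ)]
  convert key using 4 with n n
  · field_simp
  · field_simp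
  · field_simp

lemma summable_exp_abs (c : ℝ) (hc : 0 < c) (N : ℕ) (hN : 0 < N) (a : ℝ) :
    Summable fun n : ℤ => Real.exp (-c * |a + N * n|) := by
  have hNR : (0 : ℝ) < N := by exact_mod_cast hN
  have h0 : Summable fun n : ℕ => Real.exp (n * (-(c * N))) :=
    Real.summable_exp_nat_mul_iff.mpr (by nlinarith [mul_pos hc hNR])
  have h1 : Summable fun n : ℤ => Real.exp (-(c * N) * |(n : ℝ)|) := by
    apply Summable.of_nat_of_neg
    · refine h0.congr fun n => ?_
      congr 1
      simp
      ring
    · refine h0.congr fun n => ?_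
      congr 1
      simp
      ring
  refine Summable.of_nonneg_of_le (fun n => (Real.exp_pos _).le) (fun n => ?_)
    (h1.mul_left (Real.exp (c * |a|)))
  rw [← Real.exp_add]
  apply Real.exp_le_exp.mpr
  have : |(N : ℝ) * n| ≤ |a + N * n| + |a| := by
    calc |(N : ℝ) * n| = |(a + N * n) - a| := by congr 1; ring
      _ ≤ _ := abs_sub _ _
  rw [abs_mul, abs_of_pos hNR] at this
  nlinarith

lemma summable_2d (f : ℤ × ℤ → ℂ) (C c : ℝ) (hc : 0 < c) (N₁ N₂ : ℕ) (h₁ : 0 < N₁) (h₂ : 0 < N₂)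
    (a b : ℝ)
    (hf : ∀ p : ℤ × ℤ, ‖f p‖ ≤ C * Real.exp (-c * (|a + N₁ * p.1| + |b + N₂ * p.2|))) :
    Summable f := by
  have := (summable_exp_abs c hc N₁ h₁ a).mul_of_nonneg (summable_exp_abs c hc N₂ h₂ b)
    (fun _ => (Real.exp_pos _).le) (fun _ => (Real.exp_pos _).le)
  refine Summable.of_norm_bounded (this.mul_left C) (fun p => (hf p).trans_eq ?_)
  rw [← Real.exp_add]
  ring_nf

lemma r_exp_bound (c r : ℝ) (hc : 0 < c) :
    r * Real.exp (-c * r ^ 2) ≤ Real.exp (1 / c) * Real.exp (-r) := by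
  have h1 : r ≤ Real.exp r := by linarith [Real.add_one_le_exp r]
  calc r * Real.exp (-c * r ^ 2) ≤ Real.exp r * Real.exp (-c * r ^ 2) := by gcongr
    _ ≤ _ := by
      rw [← Real.exp_add, ← Real.exp_add]
      apply Real.exp_le_exp.mpr
      have : 0 ≤ (c * r - 1) ^ 2 / c := by positivity
      have h2 : (c * r - 1) ^ 2 / c = c * r ^ 2 - 2 * r + 1 / c := by field_simp; ring
      linarith

/-- derivative kernel -/
def Dk (N : ℕ) (τ : ℂ) (s A B : ℝ) : ℂ :=
  ((2 * Real.sqrt (τ.im / N) * (s * B - A / s) : ℝ) : ℂ) *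
    Complex.exp (((-Real.pi * τ.im * (A ^ 2 / s ^ 2 + s ^ 2 * B ^ 2) / N : ℝ) : ℂ) +
      2 * Real.pi * Complex.I * ((-(τ.re * A * B) / N : ℝ) : ℂ))

def Kf (N : ℕ) (τ : ℂ) (s M B : ℝ) : ℂ :=
  (M + (starRingEnd ℂ) τ * B) *
    ((Real.exp (-(Real.pi * s ^ 2 / (τ.im * N)) * Complex.normSq (M + τ * B)) : ℝ) : ℂ)

lemma norm_eC (x : ℝ) : ‖eC (x : ℂ)‖ = 1 := by
  rw [eC, show (2 * Real.pi * Complex.I * x : ℂ) = ((2 * Real.pi * x : ℝ) : ℂ) * Complex.I by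
    push_cast; ring]
  exact Complex.norm_exp_ofReal_mul_I _

lemma norm_Dk (N : ℕ) (τ : ℂ) (s A B : ℝ) :
    ‖Dk N τ s A B‖ = 2 * Real.sqrt (τ.im / N) * |s * B - A / s| *
      Real.exp (-Real.pi * τ.im * (A ^ 2 / s ^ 2 + s ^ 2 * B ^ 2) / N) := by
  rw [Dk, norm_mul, Complex.exp_add, norm_mul, Complex.norm_real, Complex.norm_exp_ofReal]
  have := norm_eC (-(τ.re * A * B) / N)
  rw [eC] at this
  rw [this, mul_one, Real.norm_eq_abs, abs_mul, abs_of_nonneg (by positivity)]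

lemma Dk_bound (N : ℕ) (hN : 0 < N) (τ : ℂ) (hτ : 0 < τ.im) (s : ℝ) (hs : 0 < s) :
    ∃ C c : ℝ, 0 < c ∧ ∀ A B : ℝ, ‖Dk N τ s A B‖ ≤ C * Real.exp (-c * (|A| + |B|)) := by
  have hNR : (0 : ℝ) < N := by exact_mod_cast hN
  set k : ℝ := Real.pi * τ.im / (2 * N) with hk
  have hk0 : 0 < k := by positivity
  refine ⟨2 * Real.sqrt (τ.im / N) * Real.exp (1 / k), min s s⁻¹, by positivity, fun A B => ?_⟩
  rw [norm_Dk]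
  set r := s * |B| + s⁻¹ * |A| with hr
  have hr0 : 0 ≤ r := by positivity
  have h1 : |s * B - A / s| ≤ r := by
    refine (abs_sub _ _).trans_eq ?_
    rw [abs_mul, abs_div, abs_of_pos hs, hr, div_eq_inv_mul]
  have h2 : -Real.pi * τ.im * (A ^ 2 / s ^ 2 + s ^ 2 * B ^ 2) / N ≤ -k * r ^ 2 := by
    have e1 : A ^ 2 / s ^ 2 + s ^ 2 * B ^ 2 = (s⁻¹ * |A|) ^ 2 + (s * |B|) ^ 2 := by
      rw [mul_pow, mul_pow, sq_abs, sq_abs]; field_simp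
    rw [e1]
    have e2 : -Real.pi * τ.im * ((s⁻¹ * |A|) ^ 2 + (s * |B|) ^ 2) / N =
      -k * (2 * ((s⁻¹ * |A|) ^ 2 + (s * |B|) ^ 2)) := by rw [hk]; field_simp
    rw [e2]
    have : r ^ 2 ≤ 2 * ((s⁻¹ * |A|) ^ 2 + (s * |B|) ^ 2) := by
      rw [hr]; nlinarith [sq_nonneg (s⁻¹ * |A| - s * |B|)]
    nlinarith
  have h3 : -r ≤ -(min s s⁻¹) * (|A| + |B|) := by
    have := mul_le_mul_of_nonneg_right (min_le_left s s⁻¹) (abs_nonneg B)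
    have := mul_le_mul_of_nonneg_right (min_le_right s s⁻¹) (abs_nonneg A)
    rw [hr]; linarith
  calc _ ≤ 2 * Real.sqrt (τ.im / N) * r * Real.exp (-k * r ^ 2) := by gcongr
    _ = 2 * Real.sqrt (τ.im / N) * (r * Real.exp (-k * r ^ 2)) := by ring
    _ ≤ 2 * Real.sqrt (τ.im / N) * (Real.exp (1 / k) * Real.exp (-r)) := by
        exact mul_le_mul_of_nonneg_left (r_exp_bound k r hk0) (by positivity)
    _ ≤ 2 * Real.sqrt (τ.im / N) * (Real.exp (1 / k) * Real.exp (-(min s s⁻¹) * (|A| + |B|))) := by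
        gcongr
    _ = _ := by ring

lemma Kf_bound (N : ℕ) (hN : 0 < N) (τ : ℂ) (hτ : 0 < τ.im) (s : ℝ) (hs : 0 < s) :
    ∃ C c : ℝ, 0 < c ∧ ∀ M B : ℝ, ‖Kf N τ s M B‖ ≤ C * Real.exp (-c * (|M| + |B|)) := by
  have hNR : (0 : ℝ) < N := by exact_mod_cast hN
  set k : ℝ := Real.pi * s ^ 2 / (τ.im * N) with hk
  have hk0 : 0 < k := by positivity
  set c : ℝ := (1 + |τ.re| / τ.im + 1 / τ.im)⁻¹ with hcdef
  have hc0 : 0 < 1 + |τ.re| / τ.im + 1 / τ.im := by positivity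
  refine ⟨Real.exp (1 / k), c, by positivity, fun M B => ?_⟩
  set z : ℂ := M + τ * B with hz
  have hre : z.re = M + τ.re * B := by simp [hz]
  have him : z.im = τ.im * B := by simp [hz]
  have hB : |B| ≤ ‖z‖ / τ.im := by
    rw [le_div_iff₀ hτ]
    have := Complex.abs_im_le_norm z
    rw [him, abs_mul, abs_of_pos hτ] at this
    linarith
  have hM : |M| ≤ ‖z‖ + |τ.re| * (‖z‖ / τ.im) := by
    have h1 := Complex.abs_re_le_norm z
    have h2 : |M| ≤ |z.re| + |τ.re * B| := by
      calc |M| = |z.re - τ.re * B| := by rw [hre]; congr 1; ring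
        _ ≤ _ := abs_sub _ _
    rw [abs_mul] at h2
    have := mul_le_mul_of_nonneg_left hB (abs_nonneg τ.re)
    linarith
  have hsum : c * (|M| + |B|) ≤ ‖z‖ := by
    rw [hcdef, inv_mul_le_iff₀ hc0]
    calc |M| + |B| ≤ ‖z‖ + |τ.re| * (‖z‖ / τ.im) + ‖z‖ / τ.im := by linarith
      _ = _ := by ring
  have hconj : (M : ℂ) + (starRingEnd ℂ) τ * B = (starRingEnd ℂ) z := by
    simp [hz]
  rw [Kf, norm_mul, hconj, RCLike.norm_conj, Complex.norm_real, Real.norm_eq_abs,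
    abs_of_pos (Real.exp_pos _), ← hz, Complex.normSq_eq_norm_sq, ← hk]
  refine (r_exp_bound k ‖z‖ hk0).trans ?_
  gcongr
  linarith

lemma summable_Dk (N : ℕ) (hN : 0 < N) (τ : ℂ) (hτ : 0 < τ.im) (s : ℝ) (hs : 0 < s) (a b : ℝ)
    (g : ℤ × ℤ → ℝ) :
    Summable fun p : ℤ × ℤ => Dk N τ s (a + N * p.1) (b + N * p.2) * eC (g p : ℂ) := by
  obtain ⟨C, c, hc, h⟩ := Dk_bound N hN τ hτ s hs
  refine summable_2d _ C c hc N N hN hN a b (fun p => ?_)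
  rw [norm_mul, norm_eC, mul_one]
  exact h _ _

lemma summable_Kf (N : ℕ) (hN : 0 < N) (τ : ℂ) (hτ : 0 < τ.im) (s : ℝ) (hs : 0 < s) (a b : ℝ)
    (L : ℕ) (hL : 0 < L) (g : ℤ × ℤ → ℝ) :
    Summable fun q : ℤ × ℤ => Kf N τ s (q.2 - a) (b + L * q.1) * eC (g q : ℂ) := by
  obtain ⟨C, c, hc, h⟩ := Kf_bound N hN τ hτ s hs
  refine summable_2d _ C c hc L 1 hL one_pos b (-a) (fun p => ?_)
  rw [norm_mul, norm_eC, mul_one]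
  refine (h _ _).trans_eq ?_
  rw [add_comm |_|]; simp [sub_eq_neg_add]

lemma T_inner (N : ℕ) (hN : 0 < N) (τ : ℂ) (hτ : 0 < τ.im) (s : ℝ) (hs : 0 < s) (a B η : ℝ) :
    ∑' n : ℤ, Dk N τ s (a + N * n) B * eC ((η * (a + N * n + B) / N : ℝ) : ℂ) =
    (2 * Complex.I * s ^ 2 / (τ.im * N)) *
      ∑' m : ℤ, Kf N τ s (m - η) B * eC (((η * B + a * m) / N : ℝ) : ℂ) := by
  have hNR : (0 : ℝ) < N := by exact_mod_cast hN
  have hNC : (N : ℂ) ≠ 0 := by exact_mod_cast hN.ne'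
  have hsC : (s : ℂ) ≠ 0 := by exact_mod_cast hs.ne'
  set v := τ.im with hv
  set u := τ.re with hu
  have hvC : (v : ℂ) ≠ 0 := by exact_mod_cast hτ.ne'
  set S : ℝ := Real.sqrt (v / N) with hS
  have hS0 : 0 < S := Real.sqrt_pos.mpr (by positivity)
  have hSC : (S : ℂ) ≠ 0 := by exact_mod_cast hS0.ne'
  have hS2 : (S : ℂ) ^ 2 = v / N := by
    have : S ^ 2 = v / N := Real.sq_sqrt (by positivity)
    exact_mod_cast this
  have hsqrt : Real.sqrt (v / (s ^ 2 * N)) = S / s := by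
    rw [show v / (s ^ 2 * N) = (v / N) / s ^ 2 by field_simp, Real.sqrt_div (by positivity),
      Real.sqrt_sq hs.le]
  have key := poisson_N N hN (v / (s ^ 2 * N)) (by positivity) a ((η - u * B) / N)
    (2 * S * s * B) (-2 * S / s)
  rw [hsqrt] at key
  set E : ℂ := Complex.exp (((-Real.pi * v * s ^ 2 * B ^ 2 / N : ℝ) : ℂ) +
    2 * Real.pi * Complex.I * ((η * B / N : ℝ) : ℂ)) with hE
  have hτre : τ = u + v * Complex.I := (Complex.re_add_im τ).symm
  have hII := Complex.I_sq
  have hL : (fun n : ℤ => Dk N τ s (a + N * n) B * eC ((η * (a + N * n + B) / N : ℝ) : ℂ)) =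
    fun n : ℤ => E * ((2 * S * s * B + -2 * S / s * (a + N * n)) *
      Complex.exp (-Real.pi * (v / (s ^ 2 * N) : ℝ) * (a + N * n) ^ 2 +
        2 * Real.pi * Complex.I * (a + N * n) * ((η - u * B) / N : ℝ))) := by
    funext n
    rw [Dk, eC, mul_assoc, ← Complex.exp_add, mul_left_comm, hE, ← Complex.exp_add]
    congr 1
    · push_cast; field_simp; ring
    · congr 1
      push_cast; field_simp; ring
  have hR : (fun m : ℤ => (2 * Complex.I * s ^ 2 / (v * N)) *
      (Kf N τ s (m - η) B * eC (((η * B + a * m) / N : ℝ) : ℂ))) =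
    fun m : ℤ => E * ((1 / (N * ((S / s : ℝ) : ℂ))) *
      ((2 * S * s * B - Complex.I * (-2 * S / s) * (m / N - ((η - u * B) / N : ℝ)) /
        (v / (s ^ 2 * N) : ℝ)) *
      Complex.exp (-Real.pi * (m / N - ((η - u * B) / N : ℝ)) ^ 2 / (v / (s ^ 2 * N) : ℝ) +
        2 * Real.pi * Complex.I * a * m / N))) := by
    funext m
    have hn : Complex.normSq (((m - η : ℝ) : ℂ) + τ * B) = (m - η + u * B) ^ 2 + (v * B) ^ 2 := by
      rw [Complex.normSq_apply]; simp [hu, hv]; ring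
    rw [Kf, eC, hn, Complex.ofReal_exp, mul_assoc (_ + _), ← Complex.exp_add]
    have e1 : ((-(Real.pi * s ^ 2 / (τ.im * N)) * ((m - η + u * B) ^ 2 + (v * B) ^ 2) : ℝ) : ℂ) +
        2 * Real.pi * Complex.I * (((η * B + a * m) / N : ℝ) : ℂ) =
        (((-Real.pi * v * s ^ 2 * B ^ 2 / N : ℝ) : ℂ) +
          2 * Real.pi * Complex.I * ((η * B / N : ℝ) : ℂ)) +
        (-Real.pi * (m / N - ((η - u * B) / N : ℝ)) ^ 2 / (v / (s ^ 2 * N) : ℝ) +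
        2 * Real.pi * Complex.I * a * m / N) := by
      rw [← hv]; push_cast; field_simp; ring
    rw [e1, Complex.exp_add, ← hE]
    have e2 : (2 * Complex.I * s ^ 2 / (v * N)) * (((m - η : ℝ) : ℂ) + (starRingEnd ℂ) τ * B) =
       (1 / (N * ((S / s : ℝ) : ℂ))) *
      ((2 * S * s * B - Complex.I * (-2 * S / s) * (m / N - ((η - u * B) / N : ℝ)) /
        (v / (s ^ 2 * N) : ℝ))) := by
      have : (starRingEnd ℂ) τ = u - v * Complex.I := by
        apply Complex.ext <;> simp [hu, hv]
      rw [this]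
      push_cast
      field_simp
      linear_combination (-B * v) * hII
    linear_combination (E * Complex.exp (-Real.pi * (m / N - ((η - u * B) / N : ℝ)) ^ 2 /
      (v / (s ^ 2 * N) : ℝ) + 2 * Real.pi * Complex.I * a * m / N)) * e2
  rw [← tsum_mul_left, hL, hR, tsum_mul_left, key, tsum_mul_left, tsum_mul_left]

lemma T_lemma (N : ℕ) (hN : 0 < N) (τ : ℂ) (hτ : 0 < τ.im) (s : ℝ) (hs : 0 < s) (a b η : ℝ) :
    ∑' p : ℤ × ℤ, Dk N τ s (a + N * p.1) (b + N * p.2) *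
      eC ((η * (a + N * p.1 + (b + N * p.2)) / N : ℝ) : ℂ) =
    (2 * Complex.I * s ^ 2 / (τ.im * N)) *
      ∑' q : ℤ × ℤ, Kf N τ s (q.2 - η) (b + N * q.1) *
        eC (((η * (b + N * q.1) + a * q.2) / N : ℝ) : ℂ) := by
  have h1 := summable_Dk N hN τ hτ s hs a b
    (fun p => η * (a + N * p.1 + (b + N * p.2)) / N)
  have h2 := summable_Kf N hN τ hτ s hs η b N hN
    (fun q => (η * (b + N * q.1) + a * q.2) / N)
  have e := Summable.tsum_prod ((Equiv.prodComm ℤ ℤ).summable_iff.mpr h1)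
  refine ((Equiv.prodComm ℤ ℤ).tsum_eq _).symm.trans (e.trans ?_)
  rw [h2.tsum_prod, ← tsum_mul_left]
  refine tsum_congr fun c => ?_
  exact T_inner N hN τ hτ s hs a (b + N * c) η

lemma eC_add (x y : ℂ) : eC (x + y) = eC x * eC y := by
  rw [eC, eC, eC, ← Complex.exp_add]; congr 1; ring

lemma eC_int (n : ℤ) : eC (n : ℂ) = 1 := by
  rw [eC, Complex.exp_eq_one_iff]; exact ⟨n, by ring⟩

lemma char_sum (N : ℕ) (hN : 0 < N) (k : ℤ) :
    ∑ d ∈ Finset.range N, eC (((d : ℝ) * k / N : ℝ) : ℂ) = if (N : ℤ) ∣ k then (N : ℂ) else 0 := by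
  have hNC : (N : ℂ) ≠ 0 := by exact_mod_cast hN.ne'
  have hp : ∀ d : ℕ, eC (((d : ℝ) * k / N : ℝ) : ℂ) = (eC ((k : ℂ) / N)) ^ d := by
    intro d
    rw [eC, eC, ← Complex.exp_nat_mul]; congr 1; push_cast; ring
  simp_rw [hp]
  split_ifs with hd
  · obtain ⟨l, rfl⟩ := hd
    have : ((((N : ℤ) * l : ℤ) : ℂ) / N) = (l : ℂ) := by push_cast; field_simp
    rw [this, eC_int]; simp
  · have hne : eC ((k : ℂ) / N) ≠ 1 := by
      intro h
      rw [eC, Complex.exp_eq_one_iff] at h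
      obtain ⟨n, hn⟩ := h
      apply hd
      refine ⟨n, ?_⟩
      have h2 : (k : ℂ) / N = n := by
        have h3 : (2 * Real.pi * Complex.I : ℂ) ≠ 0 := Complex.two_pi_I_ne_zero
        exact mul_left_cancel₀ h3 (by rw [hn]; ring)
      rw [div_eq_iff hNC] at h2
      have : (k : ℂ) = ((N * n : ℤ) : ℂ) := by rw [h2]; push_cast; ring
      exact_mod_cast this
    rw [geom_sum_eq hne, ← hp]
    have : (((N : ℝ) * k / N : ℝ) : ℂ) = ((k : ℤ) : ℂ) := by push_cast; field_simp
    rw [this, eC_int]; simp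

lemma im_S (τ : ℂ) : (-1 / τ).im = τ.im / Complex.normSq τ := by
  rw [Complex.div_im]; simp [neg_div]

lemma Kf_S (N : ℕ) (hN : 0 < N) (τ : ℂ) (hτ : 0 < τ.im) (s M B : ℝ) :
    τ⁻¹ * (1 / ((-1 / τ).im : ℂ)) * Kf N (-1 / τ) s M B = (1 / (τ.im : ℂ)) * Kf N τ s (-B) M := by
  have hNR : (0 : ℝ) < N := by exact_mod_cast hN
  have hτ0 : τ ≠ 0 := by rintro rfl; simp at hτ
  have hc0 : (starRingEnd ℂ) τ ≠ 0 := (map_ne_zero _).mpr hτ0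
  have hn : 0 < Complex.normSq τ := Complex.normSq_pos.mpr hτ0
  have hvC : (τ.im : ℂ) ≠ 0 := by exact_mod_cast hτ.ne'
  have e1 : Complex.normSq (M + -1 / τ * B) = Complex.normSq ((-B : ℝ) + τ * M) / Complex.normSq τ := by
    rw [← map_div₀]; congr 1; push_cast; field_simp; ring
  have e2 : -(Real.pi * s ^ 2 / ((-1 / τ).im * N)) * Complex.normSq (M + -1 / τ * B) =
    -(Real.pi * s ^ 2 / (τ.im * N)) * Complex.normSq ((-B : ℝ) + τ * M) := by
    rw [e1, im_S]; field_simp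
  rw [Kf, Kf, e2, im_S]
  have e3 : τ⁻¹ * (1 / ((τ.im / Complex.normSq τ : ℝ) : ℂ)) * (M + (starRingEnd ℂ) (-1 / τ) * B) =
    (1 / (τ.im : ℂ)) * ((-B : ℝ) + (starRingEnd ℂ) τ * M) := by
    rw [map_div₀]
    push_cast
    rw [Complex.normSq_eq_conj_mul_self]
    simp only [map_neg, map_one]
    field_simp
    ring
  rw [← mul_assoc, e3, mul_assoc]

lemma fixed_s (N : ℕ) (hN : 0 < N) (h : ℤ × ℤ) (τ : ℂ) (hτ : 0 < τ.im)
    (hτ' : 0 < (-1 / τ).im) (s : ℝ) (hs : 0 < s) (ε ε' : ℝ) :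
    τ⁻¹ * ∑' p : ℤ × ℤ, Dk N (-1 / τ) s (h.1 + ε + N * p.1) (h.2 + ε + N * p.2) *
      eC ((ε' * (h.1 + ε + N * p.1 + (h.2 + ε + N * p.2)) / N : ℝ) : ℂ) =
    (eC ((2 * ε * ε' / N : ℝ) : ℂ) / N) *
        ∑ d₁ ∈ Finset.range N, ∑ d₂ ∈ Finset.range N,
          eC (((((d₁ : ℝ) * (h.2 : ℝ) + (d₂ : ℝ) * (h.1 : ℝ)) / N : ℝ) : ℂ)) *
            ∑' p : ℤ × ℤ, Dk N τ s (d₁ + -ε' + N * p.1) (d₂ + -ε' + N * p.2) *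
      eC ((ε * (d₁ + -ε' + N * p.1 + (d₂ + -ε' + N * p.2)) / N : ℝ) : ℂ) := by
  have hNC : (N : ℂ) ≠ 0 := by exact_mod_cast hN.ne'
  have hNR : (N : ℝ) ≠ 0 := by exact_mod_cast hN.ne'
  have : NeZero N := ⟨hN.ne'⟩
  rw [T_lemma N hN _ hτ' s hs]
  simp_rw [T_lemma N hN _ hτ s hs]
  set R0 : ℂ := 2 * Complex.I * s ^ 2 / (τ.im * N) with hR0
  set G : ℤ × ℤ → ℂ := fun x => Kf N τ s (x.2 - ε) (x.1 - ε') *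
    eC (((ε * (x.1 - ε') + x.1 * h.1 - ε' * x.2) / N : ℝ) : ℂ) with hG
  have sG : Summable G := by
    have := summable_Kf N hN τ hτ s hs ε (-ε') 1 one_pos
      (fun x => (ε * (x.1 - ε') + x.1 * h.1 - ε' * x.2) / N)
    convert this using 3 with x
    push_cast; ring_nf
  -- right side
  have hterm : ∀ d₁ d₂ : ℕ, eC (((((d₁ : ℝ) * (h.2 : ℝ) + (d₂ : ℝ) * (h.1 : ℝ)) / N : ℝ) : ℂ)) *
      (R0 * ∑' q : ℤ × ℤ, Kf N τ s (q.2 - ε) (d₂ + -ε' + N * q.1) *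
        eC (((ε * (d₂ + -ε' + N * q.1) + (d₁ + -ε') * q.2) / N : ℝ) : ℂ)) =
      R0 * ∑' q : ℤ × ℤ, eC (((d₁ : ℝ) * ((h.2 + q.2 : ℤ) : ℝ) / N : ℝ) : ℂ) *
        G (q.1 * N + d₂, q.2) := by
    intro d₁ d₂
    rw [mul_left_comm, ← tsum_mul_left]
    congr 1
    refine tsum_congr fun q => ?_
    rw [hG]
    dsimp only
    rw [show (d₂ : ℝ) + -ε' + N * q.1 = ((q.1 * N + d₂ : ℤ) : ℝ) - ε' by push_cast; ring]
    rw [mul_left_comm, mul_left_comm (eC _) (Kf _ _ _ _ _)]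
    congr 1
    rw [← eC_add, ← eC_add, ← mul_one (eC (_ + _)), ← eC_int (q.1 * h.1), ← eC_add]
    congr 1
    push_cast
    field_simp
    ring
  have hsumm : ∀ d₁ d₂ : ℕ, Summable fun q : ℤ × ℤ =>
      eC (((d₁ : ℝ) * ((h.2 + q.2 : ℤ) : ℝ) / N : ℝ) : ℂ) * G (q.1 * N + d₂, q.2) := by
    intro d₁ d₂
    have hinj : Function.Injective (fun q : ℤ × ℤ => ((q.1 * N + d₂, q.2) : ℤ × ℤ)) := by
      rintro ⟨a, b⟩ ⟨c, d⟩ hh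
      simp only [Prod.mk.injEq, add_left_inj] at hh
      have hz : (N : ℤ) ≠ 0 := by exact_mod_cast hN.ne'
      exact Prod.ext (mul_right_cancel₀ hz hh.1) hh.2
    have := (sG.comp_injective hinj).norm
    refine Summable.of_norm ?_
    simp_rw [norm_mul, norm_eC, one_mul]
    exact this
  let IG : ℤ × ℤ → ℂ := fun x => (if (N : ℤ) ∣ h.2 + x.2 then (N : ℂ) else 0) * G x
  have sIG : Summable IG := by
    refine Summable.of_norm_bounded (sG.norm.mul_left (N : ℝ)) (fun x => ?_)
    simp only [IG, norm_mul]
    gcongr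
    split_ifs <;> simp
  have hRHS : ∑ d₁ ∈ Finset.range N, ∑ d₂ ∈ Finset.range N,
      ∑' q : ℤ × ℤ, eC (((d₁ : ℝ) * ((h.2 + q.2 : ℤ) : ℝ) / N : ℝ) : ℂ) *
        G (q.1 * N + d₂, q.2) = ∑' x : ℤ × ℤ, IG x := by
    rw [Finset.sum_comm]
    have : ∀ d₂ ∈ Finset.range N, ∑ d₁ ∈ Finset.range N, ∑' q : ℤ × ℤ,
        eC (((d₁ : ℝ) * ((h.2 + q.2 : ℤ) : ℝ) / N : ℝ) : ℂ) * G (q.1 * N + d₂, q.2) =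
        ∑' q : ℤ × ℤ, IG (q.1 * N + d₂, q.2) := by
      intro d₂ _
      rw [← Summable.tsum_finsetSum (fun d₁ _ => hsumm d₁ d₂)]
      refine tsum_congr fun q => ?_
      rw [← Finset.sum_mul, char_sum N hN]
    rw [Finset.sum_congr rfl this]
    -- combine
    let e : (Fin N × (ℤ × ℤ)) ≃ ℤ × ℤ :=
      { toFun := fun x => ((Int.divModEquiv N).symm (x.2.1, x.1), x.2.2)
        invFun := fun y => ((Int.divModEquiv N y.1).2, ((Int.divModEquiv N y.1).1, y.2))
        left_inv := fun x => by simp only [Equiv.apply_symm_apply]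
        right_inv := fun y => by simp only [Prod.mk.eta, Equiv.symm_apply_apply] }
    have se : Summable (IG ∘ e) := e.summable_iff.mpr sIG
    refine Eq.trans ?_ (e.tsum_eq IG)
    have h2 := se.tsum_prod
    refine Eq.trans ?_ h2.symm
    rw [tsum_fintype, Finset.sum_range]
    rfl
  have hsupp : ∑' x : ℤ × ℤ, IG x = N * ∑' q : ℤ × ℤ, G (q.2, -h.2 - N * q.1) := by
    rw [← tsum_mul_left]
    have hinj : Function.Injective (fun q : ℤ × ℤ => ((q.2, -h.2 - N * q.1) : ℤ × ℤ)) := by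
      rintro ⟨a, b⟩ ⟨c, d⟩ hh
      simp only [Prod.mk.injEq, sub_right_inj] at hh
      have hz : (N : ℤ) ≠ 0 := by exact_mod_cast hN.ne'
      exact Prod.ext (mul_left_cancel₀ hz hh.2) hh.1
    rw [← hinj.tsum_eq (f := IG)]
    · refine tsum_congr fun q => ?_
      simp only [IG]
      rw [if_pos ⟨-q.1, by ring⟩]
    · intro x hx
      have : (N : ℤ) ∣ h.2 + x.2 := by
        by_contra hcon
        exact hx (by simp [IG, hcon])
      obtain ⟨l, hl⟩ := this
      refine ⟨(-l, x.1), ?_⟩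
      ext
      · rfl
      · simp; linarith
  simp_rw [hterm, ← Finset.mul_sum]
  rw [hRHS, hsupp]
  have hl : τ⁻¹ * (2 * Complex.I * s ^ 2 / ((-1 / τ).im * N) *
      ∑' q : ℤ × ℤ, Kf N (-1 / τ) s (q.2 - ε') (h.2 + ε + N * q.1) *
        eC (((ε' * (h.2 + ε + N * q.1) + (h.1 + ε) * q.2) / N : ℝ) : ℂ)) =
      R0 * ∑' q : ℤ × ℤ, eC ((2 * ε * ε' / N : ℝ) : ℂ) * G (q.2, -h.2 - N * q.1) := by
    rw [← mul_assoc, ← tsum_mul_left, ← tsum_mul_left]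
    refine tsum_congr fun q => ?_
    have k := Kf_S N hN τ hτ s (q.2 - ε') (h.2 + ε + N * q.1)
    have ph : eC (((ε' * (h.2 + ε + N * q.1) + (h.1 + ε) * q.2) / N : ℝ) : ℂ) =
      eC ((2 * ε * ε' / N : ℝ) : ℂ) *
        eC (((ε * (q.2 - ε') + q.2 * h.1 - ε' * ((-h.2 - N * q.1 : ℤ) : ℝ)) / N : ℝ) : ℂ) := by
      rw [← eC_add]; congr 1; push_cast; field_simp; ring
    rw [hG]
    dsimp only
    rw [ph, show ((-h.2 - N * q.1 : ℤ) : ℝ) - ε = -(h.2 + ε + N * q.1) by push_cast; ring, hR0]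
    linear_combination (2 * Complex.I * s ^ 2 / N * (eC ((2 * ε * ε' / N : ℝ) : ℂ) *
        eC (((ε * (q.2 - ε') + q.2 * h.1 - ε' * ((-h.2 - N * q.1 : ℤ) : ℝ)) / N : ℝ) : ℂ))) * k
  rw [hl, tsum_mul_left]
  field_simp

/-- error function -/
def Ef (x : ℝ) : ℝ := (2 / Real.sqrt Real.pi) * ∫ r in (0 : ℝ)..x, Real.exp (-(r ^ 2))

lemma int_gauss : Integrable fun r : ℝ => Real.exp (-(r ^ 2)) := by
  simpa using integrable_exp_neg_mul_sq (b := 1) one_pos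

lemma gauss_Ioi : ∫ r in Set.Ioi (0 : ℝ), Real.exp (-(r ^ 2)) = Real.sqrt Real.pi / 2 := by
  simpa using integral_gaussian_Ioi 1

lemma erfc_eq (x : ℝ) : erfc x = 1 - Ef x := by
  have h := intervalIntegral.integral_interval_add_Ioi (a := 0) (b := x)
    int_gauss.integrableOn int_gauss.integrableOn
  rw [gauss_Ioi] at h
  rw [erfc, Ef]
  have hp : Real.sqrt Real.pi ≠ 0 := (Real.sqrt_pos.mpr Real.pi_pos).ne'
  have : 1 = 2 / Real.sqrt Real.pi * (Real.sqrt Real.pi / 2) := by field_simp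
  rw [this, ← h]; ring

lemma Ef_neg (x : ℝ) : Ef (-x) = -Ef x := by
  rw [Ef, Ef]
  have := intervalIntegral.integral_comp_neg (a := 0) (b := x) (fun r : ℝ => Real.exp (-(r ^ 2)))
  simp only [neg_sq, neg_zero] at this
  rw [this, intervalIntegral.integral_symm]; ring

lemma Ef_zero : Ef 0 = 0 := by simp [Ef]

lemma Ef_deriv (x : ℝ) : HasDerivAt Ef ((2 / Real.sqrt Real.pi) * Real.exp (-(x ^ 2))) x := by
  have hc : Continuous fun r : ℝ => Real.exp (-(r ^ 2)) := by fun_prop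
  exact (intervalIntegral.integral_hasDerivAt_right (hc.intervalIntegrable _ _)
    (hc.stronglyMeasurableAtFilter _ _) hc.continuousAt).const_mul _

lemma Ef_top : Tendsto Ef atTop (nhds 1) := by
  have h := intervalIntegral_tendsto_integral_Ioi (0 : ℝ) int_gauss.integrableOn tendsto_id
  rw [gauss_Ioi] at h
  have h2 := h.const_mul (2 / Real.sqrt Real.pi)
  have hp : Real.sqrt Real.pi ≠ 0 := (Real.sqrt_pos.mpr Real.pi_pos).ne'
  have : 1 = 2 / Real.sqrt Real.pi * (Real.sqrt Real.pi / 2) := by field_simp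
  rw [this]; exact h2

lemma Ef_bot : Tendsto Ef atBot (nhds (-1)) := by
  have h := (Ef_top.comp tendsto_neg_atBot_atTop).neg
  refine h.congr fun x => ?_
  simp [Ef_neg]

lemma sign_erfc (c x : ℝ) : Real.sign x * erfc (c * |x|) = Real.sign x - Ef (c * x) := by
  rw [erfc_eq]
  rcases lt_trichotomy x 0 with h | h | h
  · rw [Real.sign_of_neg h, abs_of_neg h, mul_neg, Ef_neg]; ring
  · subst h; simp [Ef_zero]
  · rw [Real.sign_of_pos h, abs_of_pos h]; ring

lemma phiTilde_iota (N : ℕ) (hN : 0 < N) (τ : ℂ) (t : ℝ) (ht : 0 < t) (A B : ℝ)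
    (hA : A ≠ 0) (hB : B ≠ 0) :
    phiTilde τ (iota N t A B).1 (iota N t A B).2 =
      eC (-(A * B / N) * τ) * ((Ef (Real.sqrt (2 * Real.pi * τ.im) *
        ((t⁻¹ * A + t * B) / Real.sqrt (2 * N))) - (Real.sign A + Real.sign B) / 2 : ℝ) : ℂ) := by
  have hNR : (0 : ℝ) < N := by exact_mod_cast hN
  have hNC : (N : ℂ) ≠ 0 := by exact_mod_cast hN.ne'
  have htC : (t : ℂ) ≠ 0 := by exact_mod_cast ht.ne'
  have hq : 0 < Real.sqrt (2 * N) := Real.sqrt_pos.mpr (by positivity)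
  have hq2 : Real.sqrt (2 * N) ^ 2 = 2 * N := Real.sq_sqrt (by positivity)
  set x := (t⁻¹ * A + t * B) / Real.sqrt (2 * N) with hx
  set y := (t⁻¹ * A - t * B) / Real.sqrt (2 * N) with hy
  have hxy : (y ^ 2 - x ^ 2) / 2 = -(A * B / N) := by
    rw [hx, hy, div_pow, div_pow, hq2]; field_simp; ring
  have hxyC : (((y : ℂ) ^ 2 - (x : ℂ) ^ 2) / 2) = -(A * B / N) := by exact_mod_cast hxy
  have hs : Real.sign x * (if x ^ 2 < y ^ 2 then 1 else 0) - Real.sign x =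
    - ((Real.sign A + Real.sign B) / 2) := by
    have ht' : 0 < t⁻¹ := by positivity
    rcases lt_or_gt_of_ne hA with a | a <;> rcases lt_or_gt_of_ne hB with b | b
    · have hab : 0 < A * B / N := div_pos (mul_pos_of_neg_of_neg a b) hNR
      have hx0 : x < 0 := div_neg_of_neg_of_pos (by nlinarith) hq
      rw [if_neg (by linarith), Real.sign_of_neg a, Real.sign_of_neg b, Real.sign_of_neg hx0]
      norm_num
    · have hab : A * B / N < 0 := div_neg_of_neg_of_pos (mul_neg_of_neg_of_pos a b) hNR
      rw [if_pos (by linarith), Real.sign_of_neg a, Real.sign_of_pos b]; norm_num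
    · have hab : A * B / N < 0 := div_neg_of_neg_of_pos (mul_neg_of_pos_of_neg a b) hNR
      rw [if_pos (by linarith), Real.sign_of_pos a, Real.sign_of_neg b]; norm_num
    · have hab : 0 < A * B / N := div_pos (mul_pos a b) hNR
      have hx0 : 0 < x := div_pos (by positivity) hq
      rw [if_neg (by linarith), Real.sign_of_pos a, Real.sign_of_pos b, Real.sign_of_pos hx0]
      norm_num
  have hmain : Real.sign x * (if x ^ 2 < y ^ 2 then 1 else 0) -
      Real.sign x * erfc (Real.sqrt (2 * Real.pi * τ.im) * |x|) =
      Ef (Real.sqrt (2 * Real.pi * τ.im) * x) - (Real.sign A + Real.sign B) / 2 := by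
    rw [sign_erfc]; linarith
  rw [← hmain]
  show phiTilde τ x y = _
  rw [phiTilde, phiPlus, phiStar, hxyC]
  split_ifs <;> push_cast <;> ring

lemma Dk_deriv (N : ℕ) (hN : 0 < N) (τ : ℂ) (hτ : 0 < τ.im) (A B w : ℝ) :
    HasDerivAt (fun w : ℝ => eC (-(A * B / N) * τ) * ((Ef (Real.sqrt (2 * Real.pi * τ.im) *
        (((Real.exp w)⁻¹ * A + Real.exp w * B) / Real.sqrt (2 * N))) : ℝ) : ℂ))
      (Dk N τ (Real.exp w) A B) w := by
  have hNR : (0 : ℝ) < N := by exact_mod_cast hN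
  have hNC : (N : ℂ) ≠ 0 := by exact_mod_cast hN.ne'
  have hp := Real.pi_pos
  have hq : 0 < Real.sqrt (2 * N) := Real.sqrt_pos.mpr (by positivity)
  have hq2 : Real.sqrt (2 * N) ^ 2 = 2 * N := Real.sq_sqrt (by positivity)
  set s := Real.exp w with hs
  have hs0 : 0 < s := Real.exp_pos w
  set X := Real.sqrt (2 * Real.pi * τ.im) * ((s⁻¹ * A + s * B) / Real.sqrt (2 * N)) with hX
  have h1 : HasDerivAt (fun w : ℝ => Real.sqrt (2 * Real.pi * τ.im) *
        (((Real.exp w)⁻¹ * A + Real.exp w * B) / Real.sqrt (2 * N)))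
      (Real.sqrt (2 * Real.pi * τ.im) * ((-s / s ^ 2 * A + s * B) / Real.sqrt (2 * N))) w := by
    refine HasDerivAt.const_mul _ (HasDerivAt.div_const (HasDerivAt.add ?_ ?_) _)
    · exact ((Real.hasDerivAt_exp w).inv (Real.exp_pos w).ne').mul_const A
    · exact (Real.hasDerivAt_exp w).mul_const B
  have h2 := ((Ef_deriv X).comp w h1).ofReal_comp.const_mul (eC (-(A * B / N) * τ))
  refine h2.congr_deriv ?_
  have hX2 : X ^ 2 = Real.pi * τ.im * (s⁻¹ * A + s * B) ^ 2 / N := by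
    rw [hX, mul_pow, div_pow, hq2, Real.sq_sqrt (by positivity)]; field_simp
  have hcoef : 2 / Real.sqrt Real.pi * Real.exp (-(X ^ 2)) *
      (Real.sqrt (2 * Real.pi * τ.im) * ((-s / s ^ 2 * A + s * B) / Real.sqrt (2 * N))) =
      2 * Real.sqrt (τ.im / N) * (s * B - A / s) * Real.exp (-(X ^ 2)) := by
    have : Real.sqrt (2 * Real.pi * τ.im) = Real.sqrt Real.pi * Real.sqrt (2 * N) *
        Real.sqrt (τ.im / N) := by
      rw [← Real.sqrt_mul hp.le, ← Real.sqrt_mul (by positivity)]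
      congr 1; field_simp
    rw [this]
    have : Real.sqrt Real.pi ≠ 0 := (Real.sqrt_pos.mpr hp).ne'
    field_simp
    ring
  rw [hcoef, hX2, Dk]
  have hexp : eC (-(A * B / N) * τ) *
      ((Real.exp (-(Real.pi * τ.im * (s⁻¹ * A + s * B) ^ 2 / N)) : ℝ) : ℂ) =
      Complex.exp (((-Real.pi * τ.im * (A ^ 2 / s ^ 2 + s ^ 2 * B ^ 2) / N : ℝ) : ℂ) +
      2 * Real.pi * Complex.I * ((-(τ.re * A * B) / N : ℝ) : ℂ)) := by
    have hsC : (s : ℂ) ≠ 0 := by exact_mod_cast hs0.ne'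
    rw [eC, Complex.ofReal_exp, ← Complex.exp_add]
    congr 1
    conv_lhs => rw [← Complex.re_add_im τ]
    push_cast
    simp only [Complex.add_im, Complex.ofReal_im, Complex.mul_im, Complex.ofReal_re, Complex.I_im,
      Complex.I_re]
    push_cast
    field_simp
    linear_combination (-2 * A * B * τ.im * s ^ 2) * Complex.I_sq
  rw [← hexp]
  push_cast
  ring

lemma Ef_X_top (c : ℝ) (hc : 0 < c) (q : ℝ) (hq : 0 < q) (A B : ℝ) (hB : B ≠ 0) :
    Tendsto (fun w : ℝ => Ef (c * (((Real.exp w)⁻¹ * A + Real.exp w * B) / q))) atTop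
      (nhds (Real.sign B)) := by
  have h0 : Tendsto (fun w : ℝ => (Real.exp w)⁻¹ * A) atTop (nhds (0 * A)) :=
    (Real.tendsto_exp_atTop.inv_tendsto_atTop).mul_const A
  rcases lt_or_gt_of_ne hB with b | b
  · rw [Real.sign_of_neg b]
    refine Ef_bot.comp ?_
    refine Tendsto.const_mul_atBot hc (Tendsto.atBot_div_const hq ?_)
    exact h0.add_atBot (Real.tendsto_exp_atTop.atTop_mul_const_of_neg b)
  · rw [Real.sign_of_pos b]
    refine Ef_top.comp ?_
    refine Tendsto.const_mul_atTop hc (Tendsto.atTop_div_const hq ?_)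
    exact h0.add_atTop (Real.tendsto_exp_atTop.atTop_mul_const b)

lemma Ef_X_bot (c : ℝ) (hc : 0 < c) (q : ℝ) (hq : 0 < q) (A B : ℝ) (hA : A ≠ 0) :
    Tendsto (fun w : ℝ => Ef (c * (((Real.exp w)⁻¹ * A + Real.exp w * B) / q))) atBot
      (nhds (Real.sign A)) := by
  have h := (Ef_X_top c hc q hq B A hA).comp tendsto_neg_atBot_atTop
  refine h.congr fun w => ?_
  simp only [Function.comp, Real.exp_neg, inv_inv]
  rw [add_comm]

lemma cov_bound (k : ℝ) (hk : 0 < k) (a b : ℝ) (ha : 0 < a) (hb : 0 < b) :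
    Integrable (fun w : ℝ => (Real.exp w * b + a / Real.exp w) *
      Real.exp (-k * (Real.exp w * b - a / Real.exp w) ^ 2)) ∧
    ∫ w : ℝ, (Real.exp w * b + a / Real.exp w) *
      Real.exp (-k * (Real.exp w * b - a / Real.exp w) ^ 2) ≤ Real.sqrt (Real.pi / k) := by
  set f : ℝ → ℝ := fun w => Real.exp w * b - a / Real.exp w with hf
  set f' : ℝ → ℝ := fun w => Real.exp w * b + a / Real.exp w with hf'
  have hpos : ∀ w, 0 < f' w := fun w => by simp only [hf']; positivity
  have hd : ∀ w, HasDerivAt f (f' w) w := by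
    intro w
    have h1 := (Real.hasDerivAt_exp w).mul_const b
    have h2 := ((Real.hasDerivAt_exp w).inv (Real.exp_pos w).ne').const_mul a
    refine (h1.sub h2).congr_deriv ?_
    simp only [hf']
    have := (Real.exp_pos w).ne'
    field_simp
    ring
  have hmono : StrictMono f := strictMono_of_hasDerivAt_pos hd hpos
  have hg := integrable_exp_neg_mul_sq hk
  have key1 := (integrableOn_image_iff_integrableOn_abs_deriv_smul MeasurableSet.univ
    (fun x _ => (hd x).hasDerivWithinAt) hmono.injective.injOn
    (fun r : ℝ => Real.exp (-k * r ^ 2))).mp hg.integrableOn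
  have key2 := integral_image_eq_integral_abs_deriv_smul MeasurableSet.univ
    (fun x _ => (hd x).hasDerivWithinAt) hmono.injective.injOn
    (fun r : ℝ => Real.exp (-k * r ^ 2))
  have habs : ∀ w, |f' w| = f' w := fun w => abs_of_pos (hpos w)
  simp only [habs, smul_eq_mul, integrableOn_univ, Measure.restrict_univ] at key1 key2
  refine ⟨key1, ?_⟩
  rw [← key2, ← integral_gaussian k]
  exact setIntegral_le_integral hg (Eventually.of_forall fun x => (Real.exp_pos _).le)

lemma continuous_Dk (N : ℕ) (τ : ℂ) (A B : ℝ) :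
    Continuous fun w : ℝ => Dk N τ (Real.exp w) A B := by
  unfold Dk
  have : ∀ w : ℝ, Real.exp w ≠ 0 := fun w => (Real.exp_pos w).ne'
  fun_prop (disch := simp)

lemma Dk_int (N : ℕ) (hN : 0 < N) (τ : ℂ) (hτ : 0 < τ.im) (A B : ℝ) (hA : A ≠ 0) (hB : B ≠ 0) :
    Integrable (fun w : ℝ => Dk N τ (Real.exp w) A B) ∧
    ∫ w : ℝ, ‖Dk N τ (Real.exp w) A B‖ ≤ (2 * Real.sqrt (τ.im / N) *
      Real.sqrt (Real.pi / (Real.pi * τ.im / N))) *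
        Real.exp (-(2 * (Real.pi * τ.im / N)) * (|A| * |B|)) := by
  have hNR : (0 : ℝ) < N := by exact_mod_cast hN
  set k : ℝ := Real.pi * τ.im / N with hk
  have hk0 : 0 < k := by positivity
  obtain ⟨c1, c2⟩ := cov_bound k hk0 |A| |B| (abs_pos.mpr hA) (abs_pos.mpr hB)
  set P : ℝ := 2 * Real.sqrt (τ.im / N) * Real.exp (-(2 * k) * (|A| * |B|)) with hP
  have hb : ∀ w : ℝ, ‖Dk N τ (Real.exp w) A B‖ ≤ P * ((Real.exp w * |B| + |A| / Real.exp w) *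
      Real.exp (-k * (Real.exp w * |B| - |A| / Real.exp w) ^ 2)) := by
    intro w
    rw [norm_Dk]
    set s := Real.exp w with hs
    have hs0 : 0 < s := Real.exp_pos w
    have h1 : |s * B - A / s| ≤ s * |B| + |A| / s := by
      refine (abs_sub _ _).trans_eq ?_
      rw [abs_mul, abs_div, abs_of_pos hs0]
    have h2 : -Real.pi * τ.im * (A ^ 2 / s ^ 2 + s ^ 2 * B ^ 2) / N =
       -(2 * k) * (|A| * |B|) + -k * (s * |B| - |A| / s) ^ 2 := by
      rw [← sq_abs A, ← sq_abs B, hk]; field_simp; ring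
    rw [h2, Real.exp_add]
    calc _ ≤ 2 * Real.sqrt (τ.im / N) * (s * |B| + |A| / s) *
        (Real.exp (-(2 * k) * (|A| * |B|)) * Real.exp (-k * (s * |B| - |A| / s) ^ 2)) := by gcongr
      _ = _ := by rw [hP]; ring
  have hi : Integrable (fun w : ℝ => Dk N τ (Real.exp w) A B) :=
    (c1.const_mul P).mono' (continuous_Dk N τ A B).aestronglyMeasurable
      (Eventually.of_forall hb)
  refine ⟨hi, ?_⟩
  refine (integral_mono hi.norm (c1.const_mul P) hb).trans ?_
  rw [integral_const_mul]
  have hP0 : 0 ≤ P := by positivity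
  refine (mul_le_mul_of_nonneg_left c2 hP0).trans_eq ?_
  rw [hP]; ring

/-- the sign cutoff -/
def sg (w₀ w : ℝ) : ℂ := if w ≤ w₀ then 1 / 2 else -1 / 2

lemma norm_sg (w₀ w : ℝ) : ‖sg w₀ w‖ = 1 / 2 := by
  unfold sg; split_ifs <;> simp

lemma meas_sg (w₀ : ℝ) : Measurable (sg w₀) := by
  unfold sg
  exact Measurable.ite measurableSet_Iic measurable_const measurable_const

lemma phi_int (N : ℕ) (hN : 0 < N) (τ : ℂ) (hτ : 0 < τ.im) (t : ℝ) (ht : 0 < t) (A B : ℝ)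
    (hA : A ≠ 0) (hB : B ≠ 0) :
    phiTilde τ (iota N t A B).1 (iota N t A B).2 =
      ∫ w : ℝ, sg (Real.log t) w * Dk N τ (Real.exp w) A B := by
  have hNR : (0 : ℝ) < N := by exact_mod_cast hN
  have hp := Real.pi_pos
  obtain ⟨hi, -⟩ := Dk_int N hN τ hτ A B hA hB
  have hc : 0 < Real.sqrt (2 * Real.pi * τ.im) := Real.sqrt_pos.mpr (by positivity)
  have hq : 0 < Real.sqrt (2 * N) := Real.sqrt_pos.mpr (by positivity)
  set w₀ := Real.log t with hw
  set Q := eC (-(A * B / N) * τ) with hQ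
  have hIoi := integral_Ioi_of_hasDerivAt_of_tendsto' (a := w₀)
    (fun x _ => Dk_deriv N hN τ hτ A B x) hi.integrableOn
    (((Complex.continuous_ofReal.tendsto _).comp (Ef_X_top _ hc _ hq A B hB)).const_mul Q)
  have hIic := integral_Iic_of_hasDerivAt_of_tendsto' (a := w₀)
    (fun x _ => Dk_deriv N hN τ hτ A B x) hi.integrableOn
    (((Complex.continuous_ofReal.tendsto _).comp (Ef_X_bot _ hc _ hq A B hA)).const_mul Q)
  have hsi : Integrable (fun w : ℝ => sg w₀ w * Dk N τ (Real.exp w) A B) :=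
    hi.bdd_mul (c := 1 / 2) (meas_sg w₀).aestronglyMeasurable
      (Eventually.of_forall fun w => (norm_sg w₀ w).le)
  rw [← intervalIntegral.integral_Iic_add_Ioi (b := w₀) hsi.integrableOn hsi.integrableOn]
  have e1 : ∫ w in Set.Iic w₀, sg w₀ w * Dk N τ (Real.exp w) A B =
      ∫ w in Set.Iic w₀, (1 / 2) * Dk N τ (Real.exp w) A B := by
    refine setIntegral_congr_fun measurableSet_Iic fun w hw => ?_
    simp only [sg, if_pos (Set.mem_Iic.mp hw)]
  have e2 : ∫ w in Set.Ioi w₀, sg w₀ w * Dk N τ (Real.exp w) A B =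
      ∫ w in Set.Ioi w₀, (-1 / 2) * Dk N τ (Real.exp w) A B := by
    refine setIntegral_congr_fun measurableSet_Ioi fun w hw => ?_
    simp only [sg, if_neg (not_le.mpr (Set.mem_Ioi.mp hw))]
  rw [e1, e2, integral_const_mul, integral_const_mul, hIoi, hIic,
    phiTilde_iota N hN τ t ht A B hA hB, hw, Real.exp_log ht]
  push_cast
  ring

lemma combine {ι : Type*} (S : Finset ι) (c : ι → ℂ) (F : ι → ℤ × ℤ → ℝ → ℂ)
    (hi : ∀ i p, Integrable (F i p)) (hs : ∀ i, Summable fun p => ∫ w, ‖F i p w‖)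
    (hp : ∀ i w, Summable fun p => F i p w) :
    ∑ i ∈ S, c i * ∑' p, ∫ w, F i p w = ∫ w, ∑ i ∈ S, c i * ∑' p, F i p w := by
  have hI : ∀ p, Integrable (fun w => ∑ i ∈ S, c i * F i p w) := fun p =>
    integrable_finsetSum _ fun i _ => (hi i p).const_mul _
  have hsum : ∀ i, Summable fun p => ∫ w, F i p w := fun i =>
    (hasSum_integral_of_summable_integral_norm (hi i) (hs i)).summable
  have hN : Summable fun p => ∫ w, ‖∑ i ∈ S, c i * F i p w‖ := by
    have h1 : Summable fun p => ∑ i ∈ S, ‖c i‖ * ∫ w, ‖F i p w‖ :=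
      summable_sum fun i _ => (hs i).mul_left _
    refine Summable.of_nonneg_of_le (fun p => integral_nonneg fun w => norm_nonneg _)
      (fun p => ?_) h1
    have h2 : ∑ i ∈ S, ‖c i‖ * ∫ w, ‖F i p w‖ = ∫ w, ∑ i ∈ S, ‖c i‖ * ‖F i p w‖ := by
      rw [integral_finsetSum _ fun i _ => (hi i p).norm.const_mul _]
      simp_rw [integral_const_mul]
    rw [h2]
    refine integral_mono (hI p).norm
      (integrable_finsetSum _ fun i _ => (hi i p).norm.const_mul _) fun w => ?_
    refine (norm_sum_le _ _).trans_eq ?_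
    simp_rw [norm_mul]
  have key := (hasSum_integral_of_summable_integral_norm hI hN).tsum_eq
  have e1 : ∀ p, ∫ w, ∑ i ∈ S, c i * F i p w = ∑ i ∈ S, c i * ∫ w, F i p w := by
    intro p
    rw [integral_finsetSum _ fun i _ => (hi i p).const_mul _]
    simp_rw [integral_const_mul]
  have e2 : ∀ w, ∑' p, ∑ i ∈ S, c i * F i p w = ∑ i ∈ S, c i * ∑' p, F i p w := by
    intro w
    rw [Summable.tsum_finsetSum fun i _ => (hp i w).mul_left _]
    simp_rw [tsum_mul_left]
  simp_rw [e1, e2] at key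
  rw [← key, Summable.tsum_finsetSum fun i _ => (hsum i).mul_left _]
  simp_rw [tsum_mul_left]

lemma abs_int_add (n : ℤ) (ε : ℝ) (hε : ε ∈ Set.Ioo (-(1/2) : ℝ) (1/2)) : |ε| ≤ |(n : ℝ) + ε| := by
  have h1 : |ε| < 1 / 2 := abs_lt.mpr ⟨by linarith [hε.1], hε.2⟩
  rcases eq_or_ne n 0 with rfl | hn
  · simp
  · have h2 : (1 : ℝ) ≤ |(n : ℝ)| := by exact_mod_cast Int.one_le_abs hn
    have h3 : |(n : ℝ)| ≤ |(n : ℝ) + ε| + |ε| := by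
      calc |(n : ℝ)| = |((n : ℝ) + ε) - ε| := by congr 1; ring
        _ ≤ _ := abs_sub _ _
    linarith

/-- the integrand -/
def Fint (N : ℕ) (h : ℤ × ℤ) (τ : ℂ) (t ε ε' : ℝ) (p : ℤ × ℤ) (w : ℝ) : ℂ :=
  sg (Real.log t) w * (Dk N τ (Real.exp w) (h.1 + ε + N * p.1) (h.2 + ε + N * p.2) *
    eC ((ε' * (h.1 + ε + N * p.1 + (h.2 + ε + N * p.2)) / N : ℝ) : ℂ))

lemma theta_main (N : ℕ) (hN : 0 < N) (h : ℤ × ℤ) (τ : ℂ) (hτ : 0 < τ.im)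
    (t : ℝ) (ht : 0 < t) (ε ε' : ℝ)
    (hε : ε ∈ Set.Ioo (-(1/2) : ℝ) (1/2)) (hε0 : ε ≠ 0) :
    (∀ p, Integrable (Fint N h τ t ε ε' p)) ∧
    (Summable fun p => ∫ w, ‖Fint N h τ t ε ε' p w‖) ∧
    (∀ w, Summable fun p => Fint N h τ t ε ε' p w) ∧
    (∀ p, thetaTerm N h τ t ε ε' p = ∫ w, Fint N h τ t ε ε' p w) := by
  have hNR : (0 : ℝ) < N := by exact_mod_cast hN
  have hp := Real.pi_pos
  have hε1 : 0 < |ε| := abs_pos.mpr hε0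
  have hlow : ∀ a n : ℤ, |ε| ≤ |(a : ℝ) + ε + N * n| := by
    intro a n
    have := abs_int_add (a + N * n) ε hε
    rw [show (a : ℝ) + ε + N * n = ((a + N * n : ℤ) : ℝ) + ε by push_cast; ring]
    exact this
  have hne : ∀ a n : ℤ, (a : ℝ) + ε + N * n ≠ 0 := fun a n =>
    abs_pos.mp (hε1.trans_le (hlow a n))
  have hD := fun p : ℤ × ℤ => Dk_int N hN τ hτ (h.1 + ε + N * p.1) (h.2 + ε + N * p.2)
    (hne h.1 p.1) (hne h.2 p.2)
  have hnorm : ∀ p w, ‖Fint N h τ t ε ε' p w‖ =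
      1 / 2 * ‖Dk N τ (Real.exp w) (h.1 + ε + N * p.1) (h.2 + ε + N * p.2)‖ := by
    intro p w
    rw [Fint, norm_mul, norm_mul, norm_sg, norm_eC, mul_one]
  refine ⟨fun p => ?_, ?_, fun w => ?_, fun p => ?_⟩
  · exact ((hD p).1.mul_const _).bdd_mul (c := 1 / 2) (meas_sg _).aestronglyMeasurable
      (Eventually.of_forall fun w => (norm_sg _ w).le)
  · simp_rw [hnorm, integral_const_mul]
    refine Summable.mul_left _ ?_
    set k : ℝ := Real.pi * τ.im / N with hk
    have hk0 : 0 < k := by positivity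
    have s1 := summable_exp_abs (k * |ε|) (by positivity) N hN (h.1 + ε)
    have s2 := summable_exp_abs (k * |ε|) (by positivity) N hN (h.2 + ε)
    have s3 := s1.mul_of_nonneg s2 (fun _ => (Real.exp_pos _).le) (fun _ => (Real.exp_pos _).le)
    refine Summable.of_nonneg_of_le (fun p => integral_nonneg fun w => norm_nonneg _)
      (fun p => (hD p).2.trans ?_)
      (s3.mul_left (2 * Real.sqrt (τ.im / N) * Real.sqrt (Real.pi / k)))
    refine mul_le_mul_of_nonneg_left ?_ (by positivity)
    rw [← Real.exp_add]
    apply Real.exp_le_exp.mpr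
    have l1 := hlow h.1 p.1
    have l2 := hlow h.2 p.2
    set X := |(h.1 : ℝ) + ε + N * p.1|
    set Y := |(h.2 : ℝ) + ε + N * p.2|
    have : |ε| * X + |ε| * Y ≤ 2 * (X * Y) := by nlinarith
    have := mul_le_mul_of_nonneg_left this hk0.le
    linarith
  · exact (summable_Dk N hN τ hτ _ (Real.exp_pos w) (h.1 + ε) (h.2 + ε)
      (fun p => ε' * (h.1 + ε + N * p.1 + (h.2 + ε + N * p.2)) / N)).mul_left _
  · have e1 : ∀ a n : ℤ, ((a + N * n : ℤ) : ℝ) + ε = a + ε + N * n := by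
      intro a n; push_cast; ring
    rw [thetaTerm, e1, e1, phi_int N hN τ hτ t ht _ _ (hne h.1 p.1) (hne h.2 p.2),
      ← integral_mul_const]
    congr 1
    funext w
    rw [Fint, mul_assoc]
    congr 4
    push_cast
    ring

/-- the Poisson summation identity
`τ⁻¹·Θ̃_h(-1/τ,t;ε,ε') = (e(2εε'/N)/N)·Σ_δ e((δ₁h₂+δ₂h₁)/N)·Θ̃_δ(τ,t;-ε',ε)`,
all series converging absolutely. -/
theorem stmt19 (N : ℕ) (hN : 0 < N) (h : ℤ × ℤ) (τ : ℂ) (hτ : 0 < τ.im)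
    (t : ℝ) (ht : 0 < t) (ε ε' : ℝ)
    (hε : ε ∈ Set.Ioo (-(1/2) : ℝ) (1/2)) (hε0 : ε ≠ 0)
    (hε' : ε' ∈ Set.Ioo (-(1/2) : ℝ) (1/2)) (hε'0 : ε' ≠ 0) :
    Summable (thetaTerm N h (-1 / τ) t ε ε') ∧
    (∀ δ : ℤ × ℤ, Summable (thetaTerm N δ τ t (-ε') ε)) ∧
    τ⁻¹ * ∑' p : ℤ × ℤ, thetaTerm N h (-1 / τ) t ε ε' p =
      (eC ((2 * ε * ε' / N : ℝ) : ℂ) / N) *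
        ∑ d₁ ∈ Finset.range N, ∑ d₂ ∈ Finset.range N,
          eC (((((d₁ : ℝ) * (h.2 : ℝ) + (d₂ : ℝ) * (h.1 : ℝ)) / N : ℝ) : ℂ)) *
            ∑' p : ℤ × ℤ, thetaTerm N ((d₁ : ℤ), (d₂ : ℤ)) τ t (-ε') ε p := by
  have hτ0 : τ ≠ 0 := by rintro rfl; simp at hτ
  have hτ' : 0 < (-1 / τ).im := by
    rw [im_S]; exact div_pos hτ (Complex.normSq_pos.mpr hτ0)
  have hε'n : -ε' ∈ Set.Ioo (-(1/2) : ℝ) (1/2) := ⟨by linarith [hε'.2], by linarith [hε'.1]⟩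
  obtain ⟨l1, l2, l3, l4⟩ := theta_main N hN h (-1 / τ) hτ' t ht ε ε' hε hε0
  have r := fun δ : ℤ × ℤ => theta_main N hN δ τ hτ t ht (-ε') ε hε'n (neg_ne_zero.mpr hε'0)
  have L := hasSum_integral_of_summable_integral_norm l1 l2
  refine ⟨?_, fun δ => ?_, ?_⟩
  · rw [funext l4]; exact L.summable
  · rw [funext (r δ).2.2.2]
    exact (hasSum_integral_of_summable_integral_norm (r δ).1 (r δ).2.1).summable
  · rw [funext l4, L.tsum_eq, ← integral_const_mul]
    have C := combine (Finset.range N ×ˢ Finset.range N)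
      (fun d : ℕ × ℕ => eC (((((d.1 : ℝ) * (h.2 : ℝ) + (d.2 : ℝ) * (h.1 : ℝ)) / N : ℝ) : ℂ)))
      (fun d p w => Fint N ((d.1 : ℤ), (d.2 : ℤ)) τ t (-ε') ε p w)
      (fun d => (r _).1) (fun d => (r _).2.1) (fun d => (r _).2.2.1)
    simp_rw [Finset.sum_product] at C
    simp_rw [funext (r _).2.2.2]
    rw [C, ← integral_const_mul]
    congr 1
    funext w
    have key := fixed_s N hN h τ hτ hτ' (Real.exp w) (Real.exp_pos w) ε ε'
    simp only [Fint, tsum_mul_left, Int.cast_natCast]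
    rw [mul_left_comm, key]
    simp_rw [mul_left_comm _ (sg (Real.log t) w), ← Finset.mul_sum]
    rw [mul_left_comm]

end
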